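/- For x ≥ 2, ∑_{p ≤ √x} p/(log p) = 2x/(log x)² + O(x/(log x)³), where the sum is over primes and the implicit constant is absolute. -/

import Mathlib

open scoped Classical

/-!
The function `-(ζ₁'/ζ₁ + 1)/s`, with `ζ₁ s = (s - 1) ζ(s)`, is the Mellin transform of `ψ(x) - x`.
The 3-4-1 inequality gives a zero-free region `re s ≥ 1 - c (1 + |im s|)^(-δ)` for every `δ > 0`,
with `ζ₁'/ζ₁` of size at most `(1 + |im s|)^δ` there, so by Cauchy's estimates every derivative of
this transform is square integrable on `re s = 1`. Plancherel on the logarithmic scale then bounds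
`uⁿ (ψ(eᵘ) - eᵘ) e⁻ᵘ` in `L²` for every `n`, and since `ψ` is monotone this forces
`ψ(x) - x = O(x / log^N x)` for every `N`, hence `π(y) = y / log y + O(y / log² y)`.

As `p ↦ π(p)` enumerates `1, …, π(y)` on the primes `p ≤ y`, the sum of `π(p)` over these primes is
`π(y) (π(y) + 1) / 2`, and replacing `π(p)` by `p / log p` costs `O(π(y) y / log² y)`.
-/

namespace PrimeNumberTheorem

open Complex Filter Asymptotics MeasureTheory Topology FourierTransform Metric
open Chebyshev (psi theta)

/-! ### Growth of `(s - 1) ζ(s)` near the line `re s = 1` -/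

lemma one_le_one_add_abs (t : ℝ) : 1 ≤ 1 + |t| := le_add_of_nonneg_right (abs_nonneg t)

lemma le_rpow_mul_rpow_of_le_of_le {x a b e : ℝ} (hx : 0 ≤ x) (ha : x ≤ a) (hb : x ≤ b)
    (he : 0 ≤ e) (he1 : e ≤ 1) : x ≤ a ^ (1 - e) * b ^ e := by
  have he' : 0 ≤ 1 - e := by linarith
  calc x = x ^ (1 - e) * x ^ e := by
        rw [← Real.rpow_add_of_nonneg hx he' he, sub_add_cancel, Real.rpow_one]
    _ ≤ a ^ (1 - e) * b ^ e := by
        have ha' : 0 ≤ a := hx.trans ha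
        gcongr

lemma hasDerivAt_ofReal_cpow (r : ℂ) {x : ℝ} (hx : 0 < x) :
    HasDerivAt (fun y : ℝ ↦ (y : ℂ) ^ r) (r * (x : ℂ) ^ (r - 1)) x := by
  simpa using ((hasDerivAt_id (x : ℂ)).cpow_const (ofReal_mem_slitPlane.2 hx)).comp_ofReal

lemma norm_cpow_neg_sub_cpow_neg_le {s : ℂ} (hs : 0 ≤ s.re) {a u : ℝ} (ha : 0 < a) (hau : a ≤ u)
    (hua : u ≤ a + 1) : ‖(a : ℂ) ^ (-s) - (u : ℂ) ^ (-s)‖ ≤ ‖s‖ * a ^ (-s.re - 1) := by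
  have hderiv : ∀ x ∈ Set.Ico a (a + 1), ‖-s * (x : ℂ) ^ (-s - 1)‖ ≤ ‖s‖ * a ^ (-s.re - 1) := by
    intro x hx
    rw [norm_mul, norm_neg, norm_cpow_eq_rpow_re_of_pos (ha.trans_le hx.1)]
    simp only [sub_re, neg_re, one_re]
    gcongr ‖s‖ * ?_
    exact Real.rpow_le_rpow_of_nonpos ha hx.1 (by linarith)
  have hmean := norm_image_sub_le_of_norm_deriv_le_segment'
    (fun x hx ↦ (hasDerivAt_ofReal_cpow (-s) (ha.trans_le hx.1)).hasDerivWithinAt) hderiv u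
    ⟨hau, hua⟩
  rw [norm_sub_rev]
  exact hmean.trans (mul_le_of_le_one_right (by positivity) (by linarith))

lemma norm_cpow_neg_sub_cpow_neg_le_interpolate {s : ℂ} (hs : 0 ≤ s.re) {a u e : ℝ} (ha : 0 < a)
    (hau : a ≤ u) (hua : u ≤ a + 1) (he : 0 ≤ e) (he1 : e ≤ 1) :
    ‖(a : ℂ) ^ (-s) - (u : ℂ) ^ (-s)‖ ≤ 2 * ‖s‖ ^ e * a ^ (-s.re - e) := by
  have htriv : ‖(a : ℂ) ^ (-s) - (u : ℂ) ^ (-s)‖ ≤ 2 * a ^ (-s.re) := by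
    refine (norm_sub_le _ _).trans ?_
    rw [norm_cpow_eq_rpow_re_of_pos ha, norm_cpow_eq_rpow_re_of_pos (ha.trans_le hau), neg_re]
    linarith [Real.rpow_le_rpow_of_nonpos ha hau (neg_nonpos.2 hs)]
  calc ‖(a : ℂ) ^ (-s) - (u : ℂ) ^ (-s)‖
      ≤ (2 * a ^ (-s.re)) ^ (1 - e) * (‖s‖ * a ^ (-s.re - 1)) ^ e :=
        le_rpow_mul_rpow_of_le_of_le (norm_nonneg _) htriv
          (norm_cpow_neg_sub_cpow_neg_le hs ha hau hua) he he1
    _ = 2 ^ (1 - e) * ‖s‖ ^ e * a ^ (-s.re - e) := by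
        rw [Real.mul_rpow (by positivity) (by positivity),
          Real.mul_rpow (by positivity) (by positivity), ← Real.rpow_mul ha.le,
          ← Real.rpow_mul ha.le, mul_mul_mul_comm, ← Real.rpow_add ha]
        ring_nf
    _ ≤ 2 * ‖s‖ ^ e * a ^ (-s.re - e) := by
        gcongr
        exact Real.rpow_le_self_of_one_le one_le_two (by linarith)

/-- The `n`-th term `(s - 1) ∫_{n+1}^{n+2} ((n+1)^(-s) - u^(-s)) du` of a series which sums to
`riemannZeta₁ s - 1` and still converges for `0 < re s`. -/
noncomputable def zetaTerm (n : ℕ) (s : ℂ) : ℂ :=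
  (s - 1) * (n + 1 : ℂ) ^ (-s) + ((n + 2 : ℂ) ^ (1 - s) - (n + 1 : ℂ) ^ (1 - s))

lemma differentiable_zetaTerm (n : ℕ) : Differentiable ℂ (zetaTerm n) := by
  have h₁ : (n + 1 : ℂ) ≠ 0 := by exact_mod_cast n.succ_ne_zero
  have h₂ : (n + 2 : ℂ) ≠ 0 := by exact_mod_cast (n + 1).succ_ne_zero
  unfold zetaTerm
  fun_prop (disch := simp [h₁, h₂])

lemma norm_zetaTerm_le {s : ℂ} (hs : 0 ≤ s.re) {e : ℝ} (he : 0 ≤ e) (he1 : e ≤ 1) (n : ℕ) :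
    ‖zetaTerm n s‖ ≤ ‖s - 1‖ * (2 * ‖s‖ ^ e * (n + 1 : ℝ) ^ (-s.re - e)) := by
  set a : ℝ := n + 1
  have ha : 0 < a := by positivity
  have hderiv (x : ℝ) (hx : x ∈ Set.Icc a (a + 1)) :
      HasDerivAt (fun y : ℝ ↦ (s - 1) * (a : ℂ) ^ (-s) * y + (y : ℂ) ^ (1 - s))
        ((s - 1) * ((a : ℂ) ^ (-s) - (x : ℂ) ^ (-s))) x := by
    convert! ((hasDerivAt_id x).ofReal_comp.const_mul ((s - 1) * (a : ℂ) ^ (-s))).add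
      (hasDerivAt_ofReal_cpow (1 - s) (ha.trans_le hx.1)) using 1
    rw [ofReal_one, show 1 - s - 1 = -s by ring]
    ring
  have hmean := norm_image_sub_le_of_norm_deriv_le_segment'
    (C := ‖s - 1‖ * (2 * ‖s‖ ^ e * a ^ (-s.re - e))) (fun x hx ↦ (hderiv x hx).hasDerivWithinAt)
    (fun x hx ↦ by
      rw [norm_mul]
      gcongr
      exact norm_cpow_neg_sub_cpow_neg_le_interpolate hs ha hx.1 hx.2.le he he1)
    (a + 1) (Set.right_mem_Icc.2 (by linarith))
  rw [add_sub_cancel_left, mul_one] at hmean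
  convert! hmean using 2
  simp only [zetaTerm, a]
  push_cast
  rw [show (n : ℂ) + 1 + 1 = n + 2 by ring]
  ring

lemma summable_nat_add_one_rpow {p : ℝ} (hp : p < -1) :
    Summable fun n : ℕ ↦ (n + 1 : ℝ) ^ p := by
  exact_mod_cast (summable_nat_add_iff 1).2 (Real.summable_nat_rpow.2 hp)

lemma hasSum_cpow_succ_sub_cpow {s : ℂ} (hs : 1 < s.re)
    (hsum : Summable fun n : ℕ ↦ (n + 2 : ℂ) ^ (1 - s) - (n + 1 : ℂ) ^ (1 - s)) :
    HasSum (fun n : ℕ ↦ (n + 2 : ℂ) ^ (1 - s) - (n + 1 : ℂ) ^ (1 - s)) (-1) := by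
  have hpartial (N : ℕ) : ∑ n ∈ Finset.range N, ((n + 2 : ℂ) ^ (1 - s) - (n + 1 : ℂ) ^ (1 - s))
      = (N + 1 : ℂ) ^ (1 - s) - 1 := by
    convert! Finset.sum_range_sub (fun n : ℕ ↦ (n + 1 : ℂ) ^ (1 - s)) N using 3
    · push_cast; ring_nf
    · simp
  have hnorm (N : ℕ) : ‖(N + 1 : ℂ) ^ (1 - s)‖ = (N + 1 : ℝ) ^ (-(s.re - 1)) := by
    have := norm_cpow_eq_rpow_re_of_pos N.cast_add_one_pos (1 - s)
    simpa using this
  have hlim : Tendsto (fun N : ℕ ↦ (N + 1 : ℂ) ^ (1 - s)) atTop (𝓝 0) := by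
    rw [tendsto_zero_iff_norm_tendsto_zero]
    simp only [hnorm]
    exact (tendsto_rpow_neg_atTop (by linarith)).comp
      (tendsto_atTop_add_const_right _ _ tendsto_natCast_atTop_atTop)
  simpa only [hsum.hasSum_iff_tendsto_nat, hpartial, zero_sub] using hlim.sub_const 1

lemma riemannZeta₁_eq_sub_one_mul {s : ℂ} (hs : s ≠ 1) :
    riemannZeta₁ s = (s - 1) * riemannZeta s := by
  rw [riemannZeta_eq_inv_sub_mul hs, mul_inv_cancel_left₀ (sub_ne_zero.2 hs)]

lemma hasSum_zetaTerm {s : ℂ} (hs : 1 < s.re) :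
    HasSum (fun n ↦ zetaTerm n s) (riemannZeta₁ s - 1) := by
  have hzeta : HasSum (fun n : ℕ ↦ (s - 1) * (n + 1 : ℂ) ^ (-s)) (riemannZeta₁ s) := by
    have hsum : Summable fun n : ℕ ↦ 1 / (n + 1 : ℂ) ^ s := by
      exact_mod_cast (summable_nat_add_iff 1).2 (summable_one_div_nat_cpow.2 hs)
    rw [riemannZeta₁_eq_sub_one_mul (by rintro rfl; simp at hs),
      zeta_eq_tsum_one_div_nat_add_one_cpow hs]
    simpa only [cpow_neg, one_div] using hsum.hasSum.mul_left (s - 1)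
  have hterm : Summable fun n ↦ zetaTerm n s := by
    refine Summable.of_norm_bounded ?_ (norm_zetaTerm_le (by linarith) le_rfl zero_le_one)
    exact ((summable_nat_add_one_rpow (by linarith)).mul_left _).mul_left _
  have htele := hasSum_cpow_succ_sub_cpow hs
    ((hterm.sub hzeta.summable).congr fun n ↦ by simp only [zetaTerm]; ring)
  simpa only [zetaTerm, sub_eq_add_neg] using hzeta.add htele

lemma differentiableOn_tsum_zetaTerm {σ R : ℝ} (hσ : 0 < σ) :
    DifferentiableOn ℂ (fun s ↦ ∑' n, zetaTerm n s) ({s | σ < s.re} ∩ ball 0 R) := by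
  have hsum : Summable fun n : ℕ ↦ (R + 1) * (2 * R * (n + 1 : ℝ) ^ (-σ - 1)) :=
    ((summable_nat_add_one_rpow (by linarith)).mul_left _).mul_left _
  refine differentiableOn_tsum_of_summable_norm hsum
    (fun n ↦ (differentiable_zetaTerm n).differentiableOn)
    ((isOpen_lt continuous_const continuous_re).inter isOpen_ball) fun n s ⟨hre, hball⟩ ↦ ?_
  rw [Set.mem_ofPred_eq] at hre
  rw [mem_ball_zero_iff] at hball
  have hR : 0 ≤ R := (norm_nonneg s).trans hball.le
  have hsub : ‖s - 1‖ ≤ R + 1 := (norm_sub_le _ _).trans (by rw [norm_one]; linarith)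
  refine (norm_zetaTerm_le (by linarith) zero_le_one le_rfl n).trans ?_
  rw [Real.rpow_one]
  gcongr
  linarith

lemma riemannZeta₁_eq_one_add_tsum {s : ℂ} (hs : 0 < s.re) :
    riemannZeta₁ s = 1 + ∑' n, zetaTerm n s := by
  set σ := min (s.re / 2) 1
  set U : Set ℂ := {z | σ < z.re} ∩ ball 0 (‖s‖ + 3)
  have hU : IsOpen U := (isOpen_lt continuous_const continuous_re).inter isOpen_ball
  have hσ : 0 < σ := by positivity
  have hsU : s ∈ U := ⟨(min_le_left _ _).trans_lt (half_lt_self hs), by simp⟩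
  have h2U : (2 : ℂ) ∈ U :=
    ⟨show σ < (2 : ℂ).re from (min_le_right _ _).trans_lt (by norm_num), by
      rw [mem_ball_zero_iff, norm_ofNat]
      linarith [norm_nonneg s]⟩
  refine (differentiable_riemannZeta₁.differentiableOn.analyticOnNhd
    hU).eqOn_of_preconnected_of_eventuallyEq
    (((differentiableOn_tsum_zetaTerm hσ).const_add 1).analyticOnNhd hU)
    ((convex_halfSpace_re_gt _).inter (convex_ball _ _)).isPreconnected h2U ?_ hsU
  filter_upwards [(isOpen_lt continuous_const continuous_re).mem_nhds
    (show (1 : ℝ) < (2 : ℂ).re by norm_num)] with z hz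
  rw [(hasSum_zetaTerm hz).tsum_eq, add_sub_cancel]

lemma one_add_abs_im_le_two_mul {s z : ℂ} {r : ℝ} (h : ‖z - s‖ ≤ r) (hr : r ≤ 1) :
    1 + |z.im| ≤ 2 * (1 + |s.im|) := by
  have him : |z.im - s.im| ≤ 1 := ((abs_im_le_norm (z - s)).trans h).trans hr
  linarith [abs_sub_abs_le_abs_sub z.im s.im, abs_nonneg s.im]

lemma exists_norm_riemannZeta₁_le {ε : ℝ} (hε : 0 < ε) (hε1 : ε ≤ 1) :
    ∃ C, 0 < C ∧ ∀ s : ℂ, 1 - ε / 2 ≤ s.re → s.re ≤ 4 →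
      ‖riemannZeta₁ s‖ ≤ C * (1 + |s.im|) ^ (1 + ε) := by
  have hsum := summable_nat_add_one_rpow (p := -(1 + ε / 2)) (by linarith)
  set K := ∑' n : ℕ, (n + 1 : ℝ) ^ (-(1 + ε / 2))
  have : 0 ≤ K := tsum_nonneg fun n ↦ by positivity
  refine ⟨1 + 4 * (2 * 4 * K), by positivity, fun s hs hs4 ↦ ?_⟩
  set τ := 1 + |s.im|
  have hτ1 : 1 ≤ τ := one_le_one_add_abs _
  have hnorm : ‖s‖ ≤ 4 * τ := by
    have := norm_le_abs_re_add_abs_im s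
    rw [abs_of_pos (by linarith)] at this
    linarith [abs_nonneg s.im]
  have hnorm_sub : ‖s - 1‖ ≤ 4 * τ := by
    have := norm_le_abs_re_add_abs_im (s - 1)
    simp only [sub_re, one_re, sub_im, one_im, sub_zero] at this
    have hre : |s.re - 1| ≤ 4 := abs_le.2 ⟨by linarith, by linarith⟩
    linarith [abs_nonneg s.im]
  have hpow : ‖s‖ ^ ε ≤ 4 * τ ^ ε := calc
    ‖s‖ ^ ε ≤ (4 * τ) ^ ε := by gcongr
    _ = 4 ^ ε * τ ^ ε := Real.mul_rpow (by norm_num) (by linarith)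
    _ ≤ 4 * τ ^ ε := by gcongr; exact Real.rpow_le_self_of_one_le (by norm_num) hε1
  have htsum : ‖∑' n, zetaTerm n s‖ ≤ 4 * τ * (2 * (4 * τ ^ ε) * K) := by
    refine tsum_of_norm_bounded ((hsum.hasSum.mul_left _).mul_left _) fun n ↦ ?_
    refine (norm_zetaTerm_le (by linarith) hε.le hε1 n).trans ?_
    gcongr
    · linarith
    · linarith
  rw [riemannZeta₁_eq_one_add_tsum (by linarith)]
  calc ‖1 + ∑' n, zetaTerm n s‖ ≤ 1 + 4 * τ * (2 * (4 * τ ^ ε) * K) :=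
        (norm_add_le _ _).trans (by rw [norm_one]; gcongr)
    _ = 1 + 4 * (2 * 4 * K) * τ ^ (1 + ε) := by
        rw [Real.rpow_one_add' (by linarith) (by linarith)]; ring
    _ ≤ (1 + 4 * (2 * 4 * K)) * τ ^ (1 + ε) := by
        linarith [Real.one_le_rpow hτ1 (by linarith : 0 ≤ 1 + ε)]

lemma exists_norm_deriv_riemannZeta₁_le {ε : ℝ} (hε : 0 < ε) (hε1 : ε ≤ 1) :
    ∃ C, 0 < C ∧ ∀ s : ℂ, 1 - ε / 4 ≤ s.re → s.re ≤ 3 →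
      ‖deriv riemannZeta₁ s‖ ≤ C * (1 + |s.im|) ^ (1 + ε) := by
  obtain ⟨C, hC, hbound⟩ := exists_norm_riemannZeta₁_le hε hε1
  refine ⟨C * 2 ^ (1 + ε) / (ε / 4), by positivity, fun s hs hs3 ↦ ?_⟩
  have hsphere : ∀ z ∈ sphere s (ε / 4),
      ‖riemannZeta₁ z‖ ≤ C * 2 ^ (1 + ε) * (1 + |s.im|) ^ (1 + ε) := by
    intro z hz
    rw [mem_sphere, dist_eq_norm] at hz
    have hre := abs_le.1 ((abs_re_le_norm (z - s)).trans hz.le)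
    rw [sub_re] at hre
    refine (hbound z (by linarith) (by linarith)).trans ?_
    rw [mul_assoc, ← Real.mul_rpow (by norm_num) (by positivity)]
    gcongr
    exact one_add_abs_im_le_two_mul hz.le (by linarith)
  rw [div_mul_eq_mul_div]
  exact norm_deriv_le_of_forall_mem_sphere_norm_le (by positivity)
    differentiable_riemannZeta₁.diffContOnCl hsphere

/-! ### The zero-free region -/

lemma riemannZeta₁_ne_zero_of_one_le_re {s : ℂ} (hs : 1 ≤ s.re) : riemannZeta₁ s ≠ 0 := by
  rcases eq_or_ne s 1 with rfl | h
  · simp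
  · rw [riemannZeta₁_eq_sub_one_mul h]
    exact mul_ne_zero (sub_ne_zero.2 h) (riemannZeta_ne_zero_of_one_le_re hs)

lemma pow_mul_norm_mul_norm_le_norm_riemannZeta₁_product {x : ℝ} (hx : 0 < x) (y : ℝ) :
    x ^ 3 * ‖(x + I * y : ℂ)‖ ^ 4 * ‖(x + 2 * I * y : ℂ)‖ ≤
      ‖riemannZeta₁ (1 + x)‖ ^ 3 * ‖riemannZeta₁ (1 + x + I * y)‖ ^ 4 *
        ‖riemannZeta₁ (1 + x + 2 * I * y)‖ := by
  have hζ : 1 ≤ ‖riemannZeta (1 + x)‖ ^ 3 * ‖riemannZeta (1 + x + I * y)‖ ^ 4 *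
      ‖riemannZeta (1 + x + 2 * I * y)‖ := by
    simpa [DirichletCharacter.LFunctionTrivChar, DirichletCharacter.LFunction_modOne_eq] using
      DirichletCharacter.norm_LFunction_product_ge_one (N := 1) 1 hx y
  have hnorm (w : ℂ) (hw : w.re = x) :
      ‖riemannZeta₁ (1 + w)‖ = ‖w‖ * ‖riemannZeta (1 + w)‖ := by
    have hw1 : 1 + w ≠ 1 := fun h ↦ hx.ne' (by rw [← hw, add_eq_left.1 h, zero_re])
    rw [riemannZeta₁_eq_sub_one_mul hw1, norm_mul, add_sub_cancel_left]
  rw [add_assoc, add_assoc, hnorm x (by simp), hnorm (x + I * y) (by simp),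
    hnorm (x + 2 * I * y) (by simp), Complex.norm_of_nonneg hx.le, ← add_assoc, ← add_assoc]
  set A := x ^ 3 * ‖(x + I * y : ℂ)‖ ^ 4 * ‖(x + 2 * I * y : ℂ)‖
  calc A ≤ A * _ := le_mul_of_one_le_right (by positivity) hζ
    _ = _ := by simp only [A]; ring

lemma exists_le_norm_riemannZeta₁_of_abs_im_le_one :
    ∃ c, 0 < c ∧ ∀ s : ℂ, 1 ≤ s.re → s.re ≤ 3 → |s.im| ≤ 1 → c ≤ ‖riemannZeta₁ s‖ := by
  have hK : IsCompact (Set.Icc (1 : ℝ) 3 ×ℂ Set.Icc (-1 : ℝ) 1) :=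
    isCompact_Icc.reProdIm isCompact_Icc
  obtain ⟨z, hz, hmin⟩ := hK.exists_isMinOn ⟨1, by simp [mem_reProdIm]⟩
    differentiable_riemannZeta₁.continuous.norm.continuousOn
  exact ⟨‖riemannZeta₁ z‖,
    norm_pos_iff.2 (riemannZeta₁_ne_zero_of_one_le_re (mem_reProdIm.1 hz).1.1),
    fun s h1 h3 him ↦ hmin (mem_reProdIm.2 ⟨⟨h1, h3⟩, abs_le.1 him⟩)⟩

lemma one_add_abs_two_mul_rpow_le (y : ℝ) {ε : ℝ} (hε : 0 ≤ ε) (hε1 : ε ≤ 1) :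
    (1 + |2 * y|) ^ (1 + ε) ≤ 4 * (1 + |y|) ^ (1 + ε) := calc
  (1 + |2 * y|) ^ (1 + ε) ≤ (2 * (1 + |y|)) ^ (1 + ε) := by
    gcongr
    rw [abs_mul, abs_two]
    linarith
  _ = 2 ^ (1 + ε) * (1 + |y|) ^ (1 + ε) := Real.mul_rpow zero_le_two (by positivity)
  _ ≤ 2 ^ (2 : ℝ) * (1 + |y|) ^ (1 + ε) := by gcongr <;> linarith
  _ = 4 * (1 + |y|) ^ (1 + ε) := by norm_num

lemma exists_le_norm_riemannZeta₁_pow_four {ε : ℝ} (hε : 0 < ε) (hε1 : ε ≤ 1) :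
    ∃ C, 0 < C ∧ ∀ x y : ℝ, 0 < x → x ≤ 2 → 1 ≤ |y| →
      x ^ 3 * (1 + |y|) ^ (4 - ε) ≤ C ^ 4 * ‖riemannZeta₁ (1 + x + I * y)‖ ^ 4 := by
  obtain ⟨C, hC, hbound⟩ := exists_norm_riemannZeta₁_le hε hε1
  refine ⟨3 * C, by positivity, fun x y hx hx2 hy ↦ ?_⟩
  set τ := 1 + |y|
  have hτ : 0 < τ := by positivity
  have h1 : ‖riemannZeta₁ (1 + x)‖ ≤ C := by
    simpa using hbound (1 + x) (by simp; linarith) (by simp; linarith)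
  have h2 : ‖riemannZeta₁ (1 + x + 2 * I * y)‖ ≤ 4 * C * (τ * τ ^ ε) := by
    have him : (1 + x + 2 * I * y : ℂ).im = 2 * y := by simp
    have h := hbound (1 + x + 2 * I * y) (by simp; linarith) (by simp; linarith)
    have hpow := one_add_abs_two_mul_rpow_le y hε.le hε1
    rw [him] at h
    rw [← Real.rpow_one_add' hτ.le (by linarith)]
    linarith [mul_le_mul_of_nonneg_left hpow hC.le]
  have hn1 : τ / 2 ≤ ‖(x + I * y : ℂ)‖ := by
    have him : |y| ≤ ‖(x + I * y : ℂ)‖ := by simpa using abs_im_le_norm (x + I * y : ℂ)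
    linarith
  have hn2 : τ ≤ ‖(x + 2 * I * y : ℂ)‖ := by
    have him : 2 * |y| ≤ ‖(x + 2 * I * y : ℂ)‖ := by
      simpa [abs_mul] using abs_im_le_norm (x + 2 * I * y : ℂ)
    linarith
  have h341 : x ^ 3 * (τ / 2) ^ 4 * τ ≤
      C ^ 3 * ‖riemannZeta₁ (1 + x + I * y)‖ ^ 4 * (4 * C * (τ * τ ^ ε)) := calc
    _ ≤ _ := by gcongr
    _ ≤ _ := pow_mul_norm_mul_norm_le_norm_riemannZeta₁_product hx y
    _ ≤ _ := by gcongr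
  have hsub : τ ^ (4 - ε) = τ ^ 4 / τ ^ ε := by rw [Real.rpow_sub hτ]; norm_cast
  rw [hsub, ← mul_div_assoc, div_le_iff₀ (by positivity)]
  refine le_of_mul_le_mul_right ?_ (by positivity : 0 < τ / 16)
  have : 0 ≤ C ^ 4 * ‖riemannZeta₁ (1 + x + I * y)‖ ^ 4 * τ ^ ε * τ := by positivity
  linear_combination h341 + 17 / 16 * this

lemma exists_le_norm_riemannZeta₁ {ε : ℝ} (hε : 0 < ε) (hε1 : ε ≤ 1) :
    ∃ c, 0 < c ∧ ∀ s : ℂ, 1 < s.re → s.re ≤ 3 →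
      c * ((s.re - 1) ^ (3 / 4 : ℝ) * (1 + |s.im|) ^ (1 - ε / 4)) ≤ ‖riemannZeta₁ s‖ := by
  obtain ⟨c, hc, hsmall⟩ := exists_le_norm_riemannZeta₁_of_abs_im_le_one
  obtain ⟨C, hC, hlarge⟩ := exists_le_norm_riemannZeta₁_pow_four hε hε1
  refine ⟨min (c / 4) C⁻¹, by positivity, fun s hs hs3 ↦ ?_⟩
  have hx : 0 < s.re - 1 := by linarith
  have hτ : 1 ≤ 1 + |s.im| := one_le_one_add_abs _
  rcases le_total |s.im| 1 with him | him
  · have hx2 : (s.re - 1) ^ (3 / 4 : ℝ) ≤ 2 := calc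
      (s.re - 1) ^ (3 / 4 : ℝ) ≤ 2 ^ (3 / 4 : ℝ) := by gcongr; linarith
      _ ≤ 2 := Real.rpow_le_self_of_one_le one_le_two (by norm_num)
    have hτ2 : (1 + |s.im|) ^ (1 - ε / 4) ≤ 2 :=
      (Real.rpow_le_self_of_one_le hτ (by linarith)).trans (by linarith)
    calc _ ≤ c / 4 * (2 * 2) := by gcongr; exact min_le_left _ _
      _ = c := by ring
      _ ≤ ‖riemannZeta₁ s‖ := hsmall s hs.le hs3 him
  · have hs' : 1 + ((s.re - 1 : ℝ) : ℂ) + I * s.im = s := by apply Complex.ext <;> simp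
    have h := hlarge (s.re - 1) s.im hx (by linarith) him
    rw [hs', ← mul_pow] at h
    have hpow : ((s.re - 1) ^ (3 / 4 : ℝ) * (1 + |s.im|) ^ (1 - ε / 4)) ^ 4 =
        (s.re - 1) ^ 3 * (1 + |s.im|) ^ (4 - ε) := by
      rw [mul_pow, ← Real.rpow_mul_natCast hx.le, ← Real.rpow_mul_natCast (by positivity),
        ← Real.rpow_natCast (s.re - 1) 3]
      ring_nf
    rw [← hpow] at h
    calc _ ≤ C⁻¹ * ((s.re - 1) ^ (3 / 4 : ℝ) * (1 + |s.im|) ^ (1 - ε / 4)) := by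
          gcongr; exact min_le_right _ _
      _ ≤ C⁻¹ * (C * ‖riemannZeta₁ s‖) := mul_le_mul_of_nonneg_left
          (le_of_pow_le_pow_left₀ four_ne_zero (by positivity) h) (by positivity)
      _ = ‖riemannZeta₁ s‖ := inv_mul_cancel_left₀ hC.ne' _

lemma exists_norm_riemannZeta₁_add_ofReal_sub_le {ε : ℝ} (hε : 0 < ε) (hε1 : ε ≤ 1) :
    ∃ C, 0 < C ∧ ∀ (s : ℂ) (x : ℝ), 1 - ε / 4 ≤ s.re → 0 ≤ x → s.re + x ≤ 3 →
      ‖riemannZeta₁ (s + x) - riemannZeta₁ s‖ ≤ C * (1 + |s.im|) ^ (1 + ε) * x := by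
  obtain ⟨C, hC, hbound⟩ := exists_norm_deriv_riemannZeta₁_le hε hε1
  refine ⟨C, hC, fun s x hs hx hsx ↦ ?_⟩
  have hmean := norm_image_sub_le_of_norm_deriv_le_segment' (a := 0) (b := x)
    (f := fun u : ℝ ↦ riemannZeta₁ (s + u)) (C := C * (1 + |s.im|) ^ (1 + ε))
    (fun u _ ↦ ((differentiable_riemannZeta₁ (s + u)).hasDerivAt.comp_const_add
      s (u : ℂ)).comp_ofReal.hasDerivWithinAt)
    (fun u hu ↦ by
      simpa using hbound (s + u) (by simp; linarith [hu.1]) (by simp; linarith [hu.2]))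
    x (Set.right_mem_Icc.2 hx)
  simpa using hmean

lemma rpow_three_fourths_mul_rpow {κ τ ε : ℝ} (hκ : 0 < κ) (hτ : 0 < τ) :
    (κ ^ 4 * τ ^ (-(5 * ε))) ^ (3 / 4 : ℝ) * τ ^ (1 - ε / 4) = κ ^ 3 * τ ^ (1 - 4 * ε) := by
  rw [Real.mul_rpow (by positivity) (by positivity), ← Real.rpow_natCast κ 4,
    ← Real.rpow_mul hκ.le, ← Real.rpow_mul hτ.le, mul_assoc, ← Real.rpow_add hτ,
    ← Real.rpow_natCast κ 3]
  congr 2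
  · norm_num
  · ring

-- Moving right to the abscissa `1 + r` costs at most half of the 3-4-1 lower bound there.
lemma exists_le_norm_riemannZeta₁_left_of_one {ε : ℝ} (hε : 0 < ε) (hε1 : ε ≤ 1) :
    ∃ c, 0 < c ∧ ∀ s : ℂ, 1 - c * (1 + |s.im|) ^ (-(5 * ε)) ≤ s.re → s.re ≤ 2 →
      c * (1 + |s.im|) ^ (1 - 4 * ε) ≤ ‖riemannZeta₁ s‖ := by
  obtain ⟨c₀, hc₀, hlower⟩ := exists_le_norm_riemannZeta₁ hε hε1
  obtain ⟨C, hC, hdiff⟩ := exists_norm_riemannZeta₁_add_ofReal_sub_le hε hε1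
  set κ := min (ε / 4) (c₀ / (4 * C))
  have hκ : 0 < κ := by positivity
  have hκC : 4 * C * κ ≤ c₀ := by
    rw [← le_div_iff₀' (by positivity)]; exact min_le_right _ _
  have hκε : κ ^ 4 ≤ ε / 4 :=
    (pow_le_of_le_one hκ.le ((min_le_left _ _).trans (by linarith)) four_ne_zero).trans
      (min_le_left _ _)
  refine ⟨min (κ ^ 4) (c₀ * κ ^ 3 / 2), by positivity, fun s hs hs3 ↦ ?_⟩
  set τ := 1 + |s.im|
  have hτ1 : 1 ≤ τ := one_le_one_add_abs _
  set r := κ ^ 4 * τ ^ (-(5 * ε)) with hr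
  have hr0 : 0 < r := by positivity
  have hrε : r ≤ ε / 4 := (mul_le_of_le_one_right (by positivity)
    (Real.rpow_le_one_of_one_le_of_nonpos hτ1 (by linarith))).trans hκε
  have hs' : 1 - r ≤ s.re := (sub_le_sub_left
    (mul_le_mul_of_nonneg_right (min_le_left _ _) (by positivity)) 1).trans hs
  have hright : c₀ * κ ^ 3 * τ ^ (1 - 4 * ε) ≤ ‖riemannZeta₁ (s + (2 * r : ℝ))‖ := by
    have h := hlower (s + (2 * r : ℝ)) (by simp; linarith) (by simp; linarith)
    rw [add_im, ofReal_im, add_zero, add_re, ofReal_re] at h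
    rw [mul_assoc, ← rpow_three_fourths_mul_rpow hκ (by positivity)]
    refine le_trans ?_ h
    gcongr
    linarith
  have hshift := hdiff s (2 * r) (by linarith) (by linarith) (by linarith)
  have hloss : C * τ ^ (1 + ε) * (2 * r) ≤ c₀ * κ ^ 3 / 2 * τ ^ (1 - 4 * ε) := calc
    C * τ ^ (1 + ε) * (2 * r) = 4 * C * κ * (κ ^ 3 / 2 * (τ ^ (1 + ε) * τ ^ (-(5 * ε)))) := by
      rw [hr]; ring
    _ ≤ c₀ * (κ ^ 3 / 2 * (τ ^ (1 + ε) * τ ^ (-(5 * ε)))) := by gcongr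
    _ = c₀ * κ ^ 3 / 2 * τ ^ (1 - 4 * ε) := by
      rw [← Real.rpow_add (by positivity)]; ring_nf
  have hc : min (κ ^ 4) (c₀ * κ ^ 3 / 2) * τ ^ (1 - 4 * ε) ≤
      c₀ * κ ^ 3 / 2 * τ ^ (1 - 4 * ε) := by gcongr; exact min_le_right _ _
  linarith [norm_sub_norm_le (riemannZeta₁ (s + (2 * r : ℝ))) (riemannZeta₁ s)]

lemma exists_norm_logDeriv_riemannZeta₁_le {δ : ℝ} (hδ : 0 < δ) (hδ1 : δ ≤ 1) :
    ∃ c C, 0 < c ∧ 0 < C ∧ ∀ s : ℂ, 1 - c * (1 + |s.im|) ^ (-δ) ≤ s.re → s.re ≤ 2 →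
      riemannZeta₁ s ≠ 0 ∧ ‖logDeriv riemannZeta₁ s‖ ≤ C * (1 + |s.im|) ^ δ := by
  set ε := δ / 5 with hε
  obtain ⟨c, hc, hlower⟩ := exists_le_norm_riemannZeta₁_left_of_one (ε := ε)
    (by positivity) (by linarith)
  obtain ⟨C, hC, hupper⟩ := exists_norm_deriv_riemannZeta₁_le (ε := ε) (by positivity) (by linarith)
  refine ⟨min c (ε / 4), C / c, by positivity, by positivity, fun s hs hs2 ↦ ?_⟩
  set τ := 1 + |s.im|
  have hτ0 : 0 < τ := by positivity
  have hτδ : τ ^ (-δ) ≤ 1 :=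
    Real.rpow_le_one_of_one_le_of_nonpos (one_le_one_add_abs _) (by linarith)
  have hregion : 1 - c * τ ^ (-δ) ≤ s.re :=
    (sub_le_sub_left (mul_le_mul_of_nonneg_right (min_le_left _ _) (by positivity)) 1).trans hs
  have hleft : 1 - ε / 4 ≤ s.re := (sub_le_sub_left (mul_le_of_le_one_right (by positivity) hτδ
    |>.trans (min_le_right _ _)) 1).trans hs
  have hlow := hlower s (by rwa [show 5 * ε = δ by rw [hε]; ring]) hs2
  have hpos : 0 < c * τ ^ (1 - 4 * ε) := by positivity
  refine ⟨norm_pos_iff.1 (hpos.trans_le hlow), ?_⟩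
  rw [logDeriv_apply, norm_div]
  calc _ ≤ C * τ ^ (1 + ε) / (c * τ ^ (1 - 4 * ε)) := by
        gcongr
        exact hupper s hleft (by linarith)
    _ = C / c * τ ^ δ := by
        rw [mul_div_mul_comm, ← Real.rpow_sub hτ0, show 1 + ε - (1 - 4 * ε) = δ by rw [hε]; ring]

/-- The function `-(ζ₁'(s) / ζ₁(s) + 1) / s`, where `ζ₁ s = (s - 1) ζ s`: for `1 < re s` it is the
Mellin transform `∫_1^∞ (ψ t - t) t^(-s-1) dt` of the error term of the prime number theorem. -/
noncomputable def psiErrorMellin (s : ℂ) : ℂ := -(logDeriv riemannZeta₁ s + 1) / s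

lemma analyticAt_psiErrorMellin {s : ℂ} (hζ : riemannZeta₁ s ≠ 0) (hs : s ≠ 0) :
    AnalyticAt ℂ psiErrorMellin s := by
  have hana : AnalyticAt ℂ riemannZeta₁ s := differentiable_riemannZeta₁.analyticAt s
  exact ((hana.deriv.div hana hζ).add analyticAt_const).neg.div analyticAt_id hs

lemma exists_norm_psiErrorMellin_le {δ : ℝ} (hδ : 0 < δ) (hδ1 : δ ≤ 1) :
    ∃ c C, 0 < c ∧ 0 < C ∧ ∀ s : ℂ, 1 - c * (1 + |s.im|) ^ (-δ) ≤ s.re → s.re ≤ 2 →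
      DifferentiableAt ℂ psiErrorMellin s ∧
        ‖psiErrorMellin s‖ ≤ C * (1 + |s.im|) ^ (δ - 1) := by
  obtain ⟨c, C, hc, hC, h⟩ := exists_norm_logDeriv_riemannZeta₁_le hδ hδ1
  refine ⟨min c (1 / 2), (C + 1) * 3, by positivity, by positivity, fun s hs hs2 ↦ ?_⟩
  set τ := 1 + |s.im|
  have hτ1 : 1 ≤ τ := one_le_one_add_abs _
  have hτδ : τ ^ (-δ) ≤ 1 := Real.rpow_le_one_of_one_le_of_nonpos hτ1 (by linarith)
  have hhalf : 1 / 2 ≤ s.re := by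
    have := (mul_le_of_le_one_right (by positivity) hτδ).trans (min_le_right c (1 / 2))
    linarith
  obtain ⟨hζ, hlog⟩ := h s ((sub_le_sub_left (mul_le_mul_of_nonneg_right (min_le_left _ _)
    (by positivity)) 1).trans hs) hs2
  have hnorm : τ ≤ 3 * ‖s‖ := by linarith [re_le_norm s, abs_im_le_norm s]
  have hs0 : 0 < ‖s‖ := by linarith
  refine ⟨(analyticAt_psiErrorMellin hζ (norm_pos_iff.1 hs0)).differentiableAt, ?_⟩
  have hnum : ‖logDeriv riemannZeta₁ s + 1‖ ≤ (C + 1) * τ ^ δ := calc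
    _ ≤ C * τ ^ δ + 1 := (norm_add_le _ _).trans (by rw [norm_one]; gcongr)
    _ ≤ (C + 1) * τ ^ δ := by linarith [Real.one_le_rpow hτ1 hδ.le]
  rw [psiErrorMellin, norm_div, norm_neg, div_le_iff₀ hs0]
  calc _ ≤ (C + 1) * τ ^ δ := hnum
    _ = (C + 1) * τ ^ (δ - 1) * τ := by
        rw [mul_assoc, ← Real.rpow_add_one (by positivity), sub_add_cancel]
    _ ≤ (C + 1) * τ ^ (δ - 1) * (3 * ‖s‖) := by gcongr
    _ = _ := by ring

lemma rpow_neg_le_two_mul_rpow_neg {a b p : ℝ} (ha : 0 < a) (hab : a ≤ 2 * b) (hp : 0 ≤ p)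
    (hp1 : p ≤ 1) : b ^ (-p) ≤ 2 * a ^ (-p) := calc
  b ^ (-p) ≤ (a / 2) ^ (-p) :=
    Real.rpow_le_rpow_of_nonpos (by positivity) (by linarith) (by linarith)
  _ = 2 ^ p * a ^ (-p) := by
    rw [Real.div_rpow ha.le zero_le_two, Real.rpow_neg zero_le_two, div_inv_eq_mul, mul_comm]
  _ ≤ 2 * a ^ (-p) := by
    gcongr
    exact Real.rpow_le_self_of_one_le one_le_two hp1

lemma exists_norm_psiErrorMellin_le_of_mem_closedBall {δ : ℝ} (hδ : 0 < δ) (hδ1 : δ ≤ 1) :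
    ∃ ρ C, 0 < ρ ∧ 0 < C ∧ ∀ s : ℂ, 1 ≤ s.re → s.re ≤ 3 / 2 →
      ∀ z ∈ closedBall s (ρ * (1 + |s.im|) ^ (-δ)), DifferentiableAt ℂ psiErrorMellin z ∧
        ‖psiErrorMellin z‖ ≤ C * (1 + |s.im|) ^ (δ - 1) := by
  obtain ⟨c, C, hc, hC, h⟩ := exists_norm_psiErrorMellin_le hδ hδ1
  refine ⟨min (c / 4) (1 / 2), 2 * C, by positivity, by positivity, fun s hs hs2 z hz ↦ ?_⟩
  rw [mem_closedBall_iff_norm] at hz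
  set r := min (c / 4) (1 / 2) * (1 + |s.im|) ^ (-δ)
  have hr : r ≤ 1 / 2 := (mul_le_of_le_one_right (by positivity)
    (Real.rpow_le_one_of_one_le_of_nonpos (one_le_one_add_abs _) (by linarith))).trans
      (min_le_right _ _)
  have hre := abs_le.1 ((abs_re_le_norm (z - s)).trans hz)
  rw [sub_re] at hre
  have hsz : 1 + |z.im| ≤ 2 * (1 + |s.im|) := one_add_abs_im_le_two_mul hz (by linarith)
  have hzs : 1 + |s.im| ≤ 2 * (1 + |z.im|) :=
    one_add_abs_im_le_two_mul (norm_sub_rev z s ▸ hz) (by linarith)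
  have hrz : r ≤ c * (1 + |z.im|) ^ (-δ) := calc
    r ≤ c / 4 * (2 * (1 + |z.im|) ^ (-δ)) := mul_le_mul (min_le_left _ _)
      (rpow_neg_le_two_mul_rpow_neg (by positivity) hsz hδ.le hδ1) (by positivity) (by positivity)
    _ ≤ c * (1 + |z.im|) ^ (-δ) := by
      linarith [(by positivity : 0 ≤ c * (1 + |z.im|) ^ (-δ))]
  obtain ⟨hdiff, hle⟩ := h z (by linarith) (by linarith)
  refine ⟨hdiff, hle.trans ?_⟩
  have hpow := rpow_neg_le_two_mul_rpow_neg (p := 1 - δ) (by positivity) hzs (by linarith)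
    (by linarith)
  rw [neg_sub] at hpow
  linarith [mul_le_mul_of_nonneg_left hpow hC.le]

lemma exists_norm_iteratedDeriv_psiErrorMellin_le (n : ℕ) {δ : ℝ} (hδ : 0 < δ) (hδ1 : δ ≤ 1) :
    ∃ C, 0 < C ∧ ∀ s : ℂ, 1 ≤ s.re → s.re ≤ 3 / 2 →
      ‖iteratedDeriv n psiErrorMellin s‖ ≤ C * (1 + |s.im|) ^ (δ - 1) := by
  -- Cauchy's estimate on a disc of radius `ρ (1 + |im s|) ^ (-η)` costs `(1 + |im s|) ^ (n η)`.
  set η := δ / (n + 1) with hη_def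
  have hη : 0 < η := by positivity
  have hηδ : η ≤ δ := div_le_self hδ.le (by linarith [n.cast_nonneg (α := ℝ)])
  obtain ⟨ρ, C, hρ, hC, hball⟩ :=
    exists_norm_psiErrorMellin_le_of_mem_closedBall hη (hηδ.trans hδ1)
  refine ⟨n.factorial * C / ρ ^ n, by positivity, fun s hs hs2 ↦ ?_⟩
  set τ := 1 + |s.im|
  have hτ : 0 < τ := by positivity
  have hr : 0 < ρ * τ ^ (-η) := by positivity
  calc _ ≤ n.factorial * (C * τ ^ (η - 1)) / (ρ * τ ^ (-η)) ^ n := by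
        refine norm_iteratedDeriv_le_of_forall_mem_sphere_norm_le n hr ?_ fun z hz ↦
          (hball s hs hs2 z (sphere_subset_closedBall hz)).2
        refine DifferentiableOn.diffContOnCl fun z hz ↦ ?_
        rw [closure_ball _ hr.ne'] at hz
        exact (hball s hs hs2 z hz).1.differentiableWithinAt
    _ = n.factorial * C / ρ ^ n * τ ^ (δ - 1) := by
        have hpow : τ ^ (η - 1) / (τ ^ (-η)) ^ n = τ ^ (δ - 1) := by
          rw [← Real.rpow_mul_natCast hτ.le, ← Real.rpow_sub hτ]
          congr 1
          rw [hη_def]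
          field_simp
          ring
        rw [mul_pow, ← hpow]
        ring

section Plancherel

open scoped ContDiff

variable {V E : Type*} [NormedAddCommGroup V] [InnerProductSpace ℝ V] [FiniteDimensional ℝ V]
  [MeasurableSpace V] [BorelSpace V] [NormedAddCommGroup E] [InnerProductSpace ℂ E]
  [CompleteSpace E] {f : V → E}

lemma coeFn_fourier_toLp (hf : Integrable f) (hf2 : MemLp f 2) :
    (𝓕 (hf2.toLp f) : Lp E 2 (volume : Measure V)) =ᵐ[volume] 𝓕 f := by
  have hcont : Continuous (𝓕 f) :=
    VectorFourier.fourierIntegral_continuous Real.continuous_fourierChar continuous_inner hf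
  refine ae_eq_of_integral_contDiff_smul_eq ((Lp.memLp _).locallyIntegrable one_le_two)
    hcont.locallyIntegrable fun g hg hgs ↦ ?_
  have hgC : ContDiff ℝ ∞ fun x ↦ (g x : ℂ) := ofRealCLM.contDiff.comp hg
  have hgS : HasCompactSupport fun x ↦ (g x : ℂ) := hgs.comp_left ofReal_zero
  have hg𝓕 : 𝓕 (hgS.toSchwartzMap hgC) = 𝓕 fun x ↦ (g x : ℂ) := SchwartzMap.fourier_coe _
  have hdistrib := DFunLike.congr_fun (Lp.fourier_toTemperedDistribution_eq (hf2.toLp f))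
    (hgS.toSchwartzMap hgC)
  simp only [TemperedDistribution.fourier_apply, Lp.toTemperedDistribution_apply] at hdistrib
  have hparseval := VectorFourier.integral_fourierIntegral_smul_eq_flip (L := innerₗ V)
    (μ := volume) (ν := volume) Real.continuous_fourierChar continuous_inner
    (hgC.continuous.integrable_of_hasCompactSupport hgS) hf
  rw [flip_innerₗ] at hparseval
  calc ∫ x, g x • (𝓕 (hf2.toLp f) : Lp E 2 (volume : Measure V)) x
      = ∫ x, (hgS.toSchwartzMap hgC) x • (𝓕 (hf2.toLp f) : Lp E 2 (volume : Measure V)) x := by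
        simp
    _ = ∫ x, 𝓕 (fun x ↦ (g x : ℂ)) x • f x := by
        rw [← hdistrib, hg𝓕]
        refine integral_congr_ae ?_
        filter_upwards [hf2.coeFn_toLp] with x hx
        rw [hx]
    _ = ∫ x, g x • 𝓕 f x := by
        simp only [← Complex.coe_smul]
        exact hparseval

lemma eLpNorm_fourier_eq (hf : Integrable f) (hf2 : MemLp f 2) :
    eLpNorm (𝓕 f) 2 volume = eLpNorm f 2 volume := by
  have hnorm := Lp.norm_fourier_eq (hf2.toLp f)
  rw [Lp.norm_def, Lp.norm_def, ENNReal.toReal_eq_toReal_iff' (Lp.eLpNorm_ne_top _)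
    (Lp.eLpNorm_ne_top _)] at hnorm
  rwa [← eLpNorm_congr_ae (coeFn_fourier_toLp hf hf2), ← eLpNorm_congr_ae hf2.coeFn_toLp]

lemma lintegral_enorm_sq_fourier_eq (hf : Integrable f) (hf2 : MemLp f 2) :
    ∫⁻ t, ‖𝓕 f t‖ₑ ^ 2 = ∫⁻ u, ‖f u‖ₑ ^ 2 := by
  have hsq (g : V → E) : eLpNorm g 2 volume ^ 2 = ∫⁻ u, ‖g u‖ₑ ^ 2 := by
    simpa using eLpNorm_nnreal_pow_eq_lintegral (f := g) (p := 2) (μ := volume) two_ne_zero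
  rw [← hsq, ← hsq, eLpNorm_fourier_eq hf hf2]

end Plancherel

/-! ### The Mellin transform of `ψ(x) - x` -/

lemma abs_psi_sub_self_le {x : ℝ} (hx : 0 ≤ x) : |psi x - x| ≤ 6 * x := by
  have hlog : Real.log 4 ≤ 2 := by
    rw [show (4 : ℝ) = 2 ^ 2 by norm_num, Real.log_pow]
    push_cast
    linarith [Real.log_two_lt_d9]
  have hpsi : psi x ≤ 6 * x :=
    (Chebyshev.psi_le_const_mul_self hx).trans (by gcongr; linarith)
  exact abs_le.2 ⟨by linarith [Chebyshev.psi_nonneg x], by linarith⟩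

lemma integrableOn_psi_mul_cpow {s : ℂ} (hs : 1 < s.re) :
    IntegrableOn (fun t : ℝ ↦ (psi t : ℂ) * (t : ℂ) ^ (-(s + 1))) (Set.Ioi 1) := by
  have hmeas : Measurable fun t : ℝ ↦ (psi t : ℂ) * (t : ℂ) ^ (-(s + 1)) := by
    have := Chebyshev.psi_mono.measurable
    fun_prop
  refine Integrable.mono' ((integrableOn_Ioi_rpow_of_lt (neg_lt_neg hs)
    one_pos).const_mul (Real.log 4 + 4)) hmeas.aestronglyMeasurable ?_
  filter_upwards [ae_restrict_mem measurableSet_Ioi] with t ht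
  have ht0 : 0 < t := one_pos.trans ht
  rw [norm_mul, norm_cpow_eq_rpow_re_of_pos ht0, Complex.norm_of_nonneg (Chebyshev.psi_nonneg t)]
  calc _ ≤ (Real.log 4 + 4) * t * t ^ (-(s + 1)).re := by
        gcongr
        exact Chebyshev.psi_le_const_mul_self ht0.le
    _ = (Real.log 4 + 4) * t ^ (-s.re) := by
        rw [mul_assoc, ← Real.rpow_one_add' ht0.le (by simp; linarith)]
        simp

lemma sum_Icc_one_vonMangoldt (t : ℝ) :
    ∑ k ∈ Finset.Icc 1 ⌊t⌋₊, ArithmeticFunction.vonMangoldt k = psi t := by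
  rw [Chebyshev.psi, ← Finset.Icc_add_one_left_eq_Ioc, zero_add]

lemma integral_psi_mul_cpow {s : ℂ} (hs : 1 < s.re) :
    ∫ t in Set.Ioi (1 : ℝ), (psi t : ℂ) * (t : ℂ) ^ (-(s + 1)) = -logDeriv riemannZeta s / s := by
  have hs0 : s ≠ 0 := by rintro rfl; norm_num at hs
  have hO : (fun n : ℕ ↦ ∑ k ∈ Finset.Icc 1 n, ArithmeticFunction.vonMangoldt k) =O[atTop]
      fun n ↦ (n : ℝ) ^ (1 : ℝ) := by
    refine IsBigO.of_bound (Real.log 4 + 4) (Eventually.of_forall fun n ↦ ?_)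
    have hsum := sum_Icc_one_vonMangoldt n
    rw [Nat.floor_natCast] at hsum
    rw [hsum, Real.rpow_one, Real.norm_of_nonneg (Chebyshev.psi_nonneg _),
      Real.norm_of_nonneg n.cast_nonneg]
    exact Chebyshev.psi_le_const_mul_self n.cast_nonneg
  have hL := LSeries_eq_mul_integral_of_nonneg _ zero_le_one hs hO
    fun _ ↦ ArithmeticFunction.vonMangoldt_nonneg
  simp only [← ofReal_sum, sum_Icc_one_vonMangoldt,
    ArithmeticFunction.LSeries_vonMangoldt_eq_deriv_riemannZeta_div hs] at hL
  rw [logDeriv_apply, eq_div_iff hs0, mul_comm, ← hL, neg_div]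

lemma logDeriv_riemannZeta₁ {s : ℂ} (hs : s ≠ 1) (hζ : riemannZeta s ≠ 0) :
    logDeriv riemannZeta₁ s = (s - 1)⁻¹ + logDeriv riemannZeta s := by
  have heq : riemannZeta₁ =ᶠ[𝓝 s] fun z ↦ (z - 1) * riemannZeta z := by
    filter_upwards [isOpen_ne.mem_nhds hs] with z hz using riemannZeta₁_eq_sub_one_mul hz
  have hsub : logDeriv (fun z : ℂ ↦ z - 1) s = (s - 1)⁻¹ := by simp [logDeriv_apply]
  rw [logDeriv_apply, heq.deriv_eq, heq.eq_of_nhds,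
    ← logDeriv_apply (fun z ↦ (z - 1) * riemannZeta z),
    logDeriv_mul (f := fun z ↦ z - 1) s (sub_ne_zero.2 hs) hζ (by fun_prop)
    (differentiableAt_riemannZeta hs), hsub]

lemma integral_psi_sub_self_mul_cpow {s : ℂ} (hs : 1 < s.re) :
    ∫ t in Set.Ioi (1 : ℝ), ((psi t - t : ℝ) : ℂ) * (t : ℂ) ^ (-(s + 1)) = psiErrorMellin s := by
  have hs0 : s ≠ 0 := by rintro rfl; norm_num at hs
  have hs1 : s ≠ 1 := by rintro rfl; norm_num at hs
  have hsub : s - 1 ≠ 0 := sub_ne_zero.2 hs1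
  have hsplit : ∀ t ∈ Set.Ioi (1 : ℝ), ((psi t - t : ℝ) : ℂ) * (t : ℂ) ^ (-(s + 1)) =
      (psi t : ℂ) * (t : ℂ) ^ (-(s + 1)) - (t : ℂ) ^ (-s) := by
    intro t ht
    have ht0 : (t : ℂ) ≠ 0 := ofReal_ne_zero.2 (one_pos.trans ht).ne'
    rw [show -s = 1 + -(s + 1) by ring, cpow_add _ _ ht0, cpow_one]
    push_cast
    ring
  rw [setIntegral_congr_fun measurableSet_Ioi hsplit,
    integral_sub (integrableOn_psi_mul_cpow hs)
      (integrableOn_Ioi_cpow_of_lt (by simpa using hs) one_pos),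
    integral_psi_mul_cpow hs, integral_Ioi_cpow_of_lt (by simpa using hs) one_pos,
    psiErrorMellin, logDeriv_riemannZeta₁ hs1 (riemannZeta_ne_zero_of_one_le_re hs.le),
    ofReal_one, one_cpow, show -s + 1 = -(s - 1) by ring, neg_div_neg_eq]
  field_simp
  ring

/-- The error term `ψ(e^u) - e^u` in logarithmic scale, restricted to `0 < u` and damped by
`e^(-σ u)`; its Fourier transform is `psiErrorMellin` on the line `re s = σ`. -/
noncomputable def dampedPsiError (σ : ℝ) : ℝ → ℂ :=
  (Set.Ioi 0).indicator fun u ↦ ((Real.exp (-σ * u) * (psi (Real.exp u) - Real.exp u) : ℝ) : ℂ)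

lemma measurable_dampedPsiError (σ : ℝ) : Measurable (dampedPsiError σ) := by
  have := Chebyshev.psi_mono.measurable
  exact Measurable.indicator (by fun_prop) measurableSet_Ioi

lemma norm_dampedPsiError_le (σ u : ℝ) :
    ‖dampedPsiError σ u‖ ≤ (Set.Ioi 0).indicator (fun u ↦ 6 * Real.exp (-(σ - 1) * u)) u := by
  rw [dampedPsiError, norm_indicator_eq_indicator_norm]
  refine Set.indicator_le_indicator ?_
  rw [norm_real, norm_mul, Real.norm_eq_abs, Real.norm_eq_abs, Real.abs_exp]
  calc _ ≤ Real.exp (-σ * u) * (6 * Real.exp u) := by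
        gcongr
        exact abs_psi_sub_self_le (Real.exp_pos u).le
    _ = 6 * (Real.exp (-σ * u) * Real.exp u) := by ring
    _ = _ := by rw [← Real.exp_add]; ring_nf

lemma integrable_pow_mul_exp_neg_mul (n : ℕ) {b : ℝ} (hb : 0 < b) :
    IntegrableOn (fun u : ℝ ↦ u ^ n * Real.exp (-b * u)) (Set.Ioi 0) := by
  simpa using integrableOn_rpow_mul_exp_neg_mul_rpow (p := 1) (s := (n : ℝ)) (b := b)
    (by linarith [n.cast_nonneg (α := ℝ)]) one_pos hb

lemma norm_pow_smul_dampedPsiError_le (σ : ℝ) (n : ℕ) (u : ℝ) :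
    ‖u ^ n • dampedPsiError σ u‖ ≤
      (Set.Ioi 0).indicator (fun u ↦ 6 * (u ^ n * Real.exp (-(σ - 1) * u))) u := by
  have h := norm_dampedPsiError_le σ u
  rw [norm_smul]
  by_cases hu : u ∈ Set.Ioi 0
  · have hpos : 0 < u := hu
    simp only [Set.indicator_of_mem hu] at h ⊢
    rw [Real.norm_of_nonneg (by positivity)]
    calc _ ≤ u ^ n * (6 * Real.exp (-(σ - 1) * u)) := by gcongr
      _ = _ := by ring
  · simp only [Set.indicator_of_notMem hu] at h ⊢
    rw [norm_le_zero_iff.1 h, norm_zero, mul_zero]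

lemma integrable_pow_smul_dampedPsiError {σ : ℝ} (hσ : 1 < σ) (n : ℕ) :
    Integrable fun u : ℝ ↦ u ^ n • dampedPsiError σ u := by
  have hmeas := measurable_dampedPsiError σ
  refine Integrable.mono' ?_ (by fun_prop) (ae_of_all _ (norm_pow_smul_dampedPsiError_le σ n))
  exact (integrable_indicator_iff measurableSet_Ioi).2
    ((integrable_pow_mul_exp_neg_mul n (sub_pos.2 hσ)).const_mul 6)

lemma memLp_two_pow_smul_dampedPsiError {σ : ℝ} (hσ : 1 < σ) (n : ℕ) :
    MemLp (fun u : ℝ ↦ u ^ n • dampedPsiError σ u) 2 := by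
  have hint := integrable_pow_smul_dampedPsiError hσ n
  have hsq : Integrable ((Set.Ioi (0 : ℝ)).indicator fun u ↦
      36 * (u ^ (2 * n) * Real.exp (-(2 * (σ - 1)) * u))) :=
    (integrable_indicator_iff measurableSet_Ioi).2
      ((integrable_pow_mul_exp_neg_mul (2 * n) (by linarith)).const_mul 36)
  rw [memLp_two_iff_integrable_sq_norm hint.aestronglyMeasurable]
  refine hsq.mono' (hint.aestronglyMeasurable.norm.pow 2) (ae_of_all _ fun u ↦ ?_)
  rw [Real.norm_of_nonneg (by positivity)]
  refine (pow_le_pow_left₀ (norm_nonneg _) (norm_pow_smul_dampedPsiError_le σ n u) 2).trans_eq ?_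
  by_cases hu : u ∈ Set.Ioi 0
  · simp only [Set.indicator_of_mem hu]
    rw [mul_pow, mul_pow, ← pow_mul, ← Real.exp_nat_mul]
    push_cast
    ring_nf
  · simp [Set.indicator_of_notMem hu]

lemma fourier_dampedPsiError {σ : ℝ} (hσ : 1 < σ) (t : ℝ) :
    𝓕 (dampedPsiError σ) t = psiErrorMellin (σ + 2 * Real.pi * I * t) := by
  have hsubst := integral_comp_exp_Ioi (fun x : ℝ ↦
    ((psi x - x : ℝ) : ℂ) * (x : ℂ) ^ (-((σ + 2 * Real.pi * I * t) + 1))) 0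
  rw [Real.exp_zero] at hsubst
  rw [← integral_psi_sub_self_mul_cpow (by simpa using hσ),
    Real.fourier_real_eq_integral_exp_smul, ← hsubst, ← integral_indicator measurableSet_Ioi]
  congr 1 with u
  by_cases hu : u ∈ Set.Ioi 0
  · have hexp : cexp (↑(-2 * Real.pi * u) * t * I) * cexp (-σ * u) =
        cexp u * cexp (u * -(σ + 2 * Real.pi * I * t + 1)) := by
      rw [← Complex.exp_add, ← Complex.exp_add]
      push_cast
      ring_nf
    simp only [dampedPsiError, Set.indicator_of_mem hu]
    rw [cpow_def_of_ne_zero (ofReal_ne_zero.2 (Real.exp_pos u).ne'),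
      ← ofReal_log (Real.exp_pos u).le, Real.log_exp, real_smul, smul_eq_mul, ofReal_mul]
    push_cast at hexp ⊢
    linear_combination ((psi (Real.exp u) : ℂ) - cexp u) * hexp
  · simp [dampedPsiError, Set.indicator_of_notMem hu]

lemma fourier_id_smul_eq_neg_deriv {E : Type*} [NormedAddCommGroup E] [NormedSpace ℂ E]
    {f : ℝ → E} {G : ℂ → E} {σ t : ℝ} (hf : Integrable f)
    (hf' : Integrable fun u : ℝ ↦ u • f u) (h : ∀ t : ℝ, 𝓕 f t = G (σ + 2 * Real.pi * I * t))
    (hG : DifferentiableAt ℂ G (σ + 2 * Real.pi * I * t)) :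
    𝓕 (fun u : ℝ ↦ u • f u) t = -deriv G (σ + 2 * Real.pi * I * t) := by
  have hline : HasDerivAt (fun t : ℝ ↦ (σ + 2 * Real.pi * I * t : ℂ)) (2 * Real.pi * I) t := by
    simpa using ((ofRealCLM.hasDerivAt (x := t)).const_mul (2 * Real.pi * I : ℂ)).const_add (σ : ℂ)
  have hcomp : HasDerivAt (𝓕 f) ((2 * Real.pi * I : ℂ) • deriv G (σ + 2 * Real.pi * I * t)) t := by
    rw [funext h]
    exact hG.hasDerivAt.scomp t hline
  have hconst : 𝓕 (fun u : ℝ ↦ (-2 * Real.pi * I * u : ℂ) • f u) t =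
      (2 * Real.pi * I : ℂ) • -𝓕 (fun u : ℝ ↦ u • f u) t := by
    rw [Real.fourier_real_eq_integral_exp_smul, Real.fourier_real_eq_integral_exp_smul,
      ← integral_neg, ← integral_smul]
    congr 1 with u
    rw [← Complex.coe_smul u, smul_neg, smul_smul, smul_smul, smul_smul, ← neg_smul]
    ring_nf
  have hderiv := (Real.hasDerivAt_fourier hf hf' t).unique hcomp
  rw [hconst] at hderiv
  exact neg_eq_iff_eq_neg.1 (smul_right_injective E two_pi_I_ne_zero hderiv)

lemma fourier_pow_smul_eq_iteratedDeriv {E : Type*} [NormedAddCommGroup E] [NormedSpace ℂ E]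
    [CompleteSpace E] {f : ℝ → E} {G : ℂ → E} {σ : ℝ} {n : ℕ}
    (hf : ∀ k ≤ n, Integrable fun u : ℝ ↦ u ^ k • f u)
    (h : ∀ t : ℝ, 𝓕 f t = G (σ + 2 * Real.pi * I * t))
    (hG : ∀ t : ℝ, AnalyticAt ℂ G (σ + 2 * Real.pi * I * t)) (t : ℝ) :
    𝓕 (fun u : ℝ ↦ u ^ n • f u) t =
      (-1 : ℂ) ^ n • iteratedDeriv n G (σ + 2 * Real.pi * I * t) := by
  induction n generalizing t with
  | zero => simpa using h t
  | succ n ih =>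
    have hsucc : (fun u : ℝ ↦ u ^ (n + 1) • f u) = fun u ↦ u • u ^ n • f u := by
      ext u
      rw [smul_smul, pow_succ']
    have hint := hf (n + 1) le_rfl
    rw [hsucc] at hint ⊢
    have hdiff := ((hG t).iterated_deriv n).differentiableAt
    rw [← iteratedDeriv_eq_iterate] at hdiff
    rw [fourier_id_smul_eq_neg_deriv (G := fun s ↦ (-1 : ℂ) ^ n • iteratedDeriv n G s)
      (hf n n.le_succ) hint (ih fun k hk ↦ hf k (hk.trans n.le_succ)) (hdiff.const_smul _),
      deriv_fun_const_smul_field, iteratedDeriv_succ, pow_succ', neg_one_mul, neg_smul]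

lemma exists_lintegral_pow_smul_dampedPsiError_le (n : ℕ) :
    ∃ K : ℝ, 0 ≤ K ∧ ∀ σ : ℝ, 1 < σ → σ ≤ 3 / 2 →
      ∫⁻ u, ‖u ^ n • dampedPsiError σ u‖ₑ ^ 2 ≤ ENNReal.ofReal K := by
  obtain ⟨C, hC, hbound⟩ :=
    exists_norm_iteratedDeriv_psiErrorMellin_le n (δ := 1 / 4) (by norm_num) (by norm_num)
  have hint : Integrable (fun t : ℝ ↦ C ^ 2 * (1 + ‖t‖) ^ (-(3 / 2) : ℝ)) :=
    (integrable_one_add_norm (by simp; norm_num)).const_mul _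
  refine ⟨∫ t : ℝ, C ^ 2 * (1 + ‖t‖) ^ (-(3 / 2) : ℝ),
    integral_nonneg fun t ↦ by positivity, fun σ hσ hσ' ↦ ?_⟩
  rw [← lintegral_enorm_sq_fourier_eq (integrable_pow_smul_dampedPsiError hσ n)
    (memLp_two_pow_smul_dampedPsiError hσ n),
    ofReal_integral_eq_lintegral_ofReal hint (ae_of_all _ fun t ↦ by positivity)]
  refine lintegral_mono fun t ↦ ?_
  rw [fourier_pow_smul_eq_iteratedDeriv
    (fun k _ ↦ integrable_pow_smul_dampedPsiError hσ k) (fourier_dampedPsiError hσ)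
    (fun t ↦ analyticAt_psiErrorMellin
      (riemannZeta₁_ne_zero_of_one_le_re (by simpa using hσ.le))
      (ne_zero_of_re_pos (by simpa using one_pos.trans hσ))),
    ← ofReal_norm, ← ENNReal.ofReal_pow (norm_nonneg _)]
  refine ENNReal.ofReal_le_ofReal ?_
  have hline := hbound (σ + 2 * Real.pi * I * t) (by simpa using hσ.le) (by simpa using hσ')
  have him : (σ + 2 * Real.pi * I * t : ℂ).im = 2 * Real.pi * t := by simp
  have hpi : 1 + ‖t‖ ≤ 1 + |2 * Real.pi * t| := by
    rw [abs_mul, Real.norm_eq_abs, abs_of_pos Real.two_pi_pos]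
    nlinarith [Real.pi_gt_three, abs_nonneg t]
  rw [him] at hline
  rw [norm_smul, norm_pow, norm_neg, norm_one, one_pow, one_mul]
  calc _ ≤ (C * (1 + ‖t‖) ^ (-(3 / 4) : ℝ)) ^ 2 := by
        gcongr
        refine hline.trans ?_
        rw [show (1 / 4 - 1 : ℝ) = -(3 / 4) by norm_num]
        gcongr ?_ * ?_
        exact Real.rpow_le_rpow_of_nonpos (by positivity) hpi (by norm_num)
    _ = _ := by
      rw [mul_pow, ← Real.rpow_mul_natCast (by positivity)]
      norm_num

/-! ### The prime number theorem -/

lemma sq_mul_le_of_lintegral_enorm_sq_le {E : Type*} [SeminormedAddCommGroup E] {f : ℝ → E}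
    {a b c K : ℝ} (hc : 0 ≤ c) (hK : 0 ≤ K) (hf : ∀ u ∈ Set.Icc a b, c ≤ ‖f u‖)
    (h : ∫⁻ u, ‖f u‖ₑ ^ 2 ≤ ENNReal.ofReal K) : c ^ 2 * (b - a) ≤ K := by
  refine (ENNReal.ofReal_le_ofReal_iff hK).1 (le_trans ?_ h)
  calc ENNReal.ofReal (c ^ 2 * (b - a)) = ∫⁻ _ in Set.Icc a b, ENNReal.ofReal (c ^ 2) := by
        rw [setLIntegral_const, Real.volume_Icc, ENNReal.ofReal_mul (by positivity)]
    _ ≤ ∫⁻ u in Set.Icc a b, ‖f u‖ₑ ^ 2 := by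
        refine setLIntegral_mono' measurableSet_Icc fun u hu ↦ ?_
        rw [← ofReal_norm, ← ENNReal.ofReal_pow (norm_nonneg _)]
        have := hf u hu
        gcongr
    _ ≤ _ := setLIntegral_le_lintegral _ _

-- By monotonicity an excess `g x ≥ (1 + d) x` persists to the right of `x`, a deficit to the left.
lemma exists_forall_Icc_half_mul_le_abs_sub_of_monotone {g : ℝ → ℝ} (hg : Monotone g) {x d : ℝ}
    (hx : 0 < x) (hd : 0 ≤ d) (hd1 : d ≤ 1) (h : d * x ≤ |g x - x|) :
    ∃ a, Real.log x - 1 / 4 ≤ a ∧ a + d / 4 ≤ Real.log x + 1 / 4 ∧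
      ∀ u ∈ Set.Icc a (a + d / 4), d * x / 2 ≤ |g (Real.exp u) - Real.exp u| := by
  have hexp (v : ℝ) : Real.exp (Real.log x + v) = x * Real.exp v := by
    rw [Real.exp_add, Real.exp_log hx]
  rcases le_abs.1 h with hexcess | hdeficit
  · refine ⟨Real.log x, by linarith, by linarith, fun u hu ↦ le_abs.2 (Or.inl ?_)⟩
    have hmono : g x ≤ g (Real.exp u) := hg ((Real.log_le_iff_le_exp hx).1 hu.1)
    have hupper : Real.exp u ≤ x * (1 + d / 2) := by
      refine (Real.exp_le_exp.2 hu.2).trans ?_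
      rw [hexp]
      have := abs_le.1 (Real.abs_exp_sub_one_le (x := d / 4) (abs_le.2 ⟨by linarith, by linarith⟩))
      rw [abs_of_nonneg (by positivity : 0 ≤ d / 4)] at this
      gcongr
      linarith
    linarith
  · refine ⟨Real.log x - d / 4, by linarith, by linarith, fun u hu ↦ le_abs.2 (Or.inr ?_)⟩
    have hmono : g (Real.exp u) ≤ g x :=
      hg ((Real.le_log_iff_exp_le hx).1 (hu.2.trans_eq (sub_add_cancel _ _)))
    have hlower : x * (1 - d / 4) ≤ Real.exp u := by
      refine le_trans ?_ (Real.exp_le_exp.2 hu.1)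
      rw [sub_eq_add_neg (Real.log x), hexp]
      gcongr
      exact Real.one_sub_le_exp_neg _
    nlinarith

lemma le_norm_pow_smul_dampedPsiError (n : ℕ) {x u : ℝ} (hx : Real.exp 2 ≤ x)
    (hxu : Real.log x - 1 / 4 ≤ u) (hux : u ≤ Real.log x + 1 / 4) :
    (Real.log x / 2) ^ n * ((x * Real.exp 2)⁻¹ * |psi (Real.exp u) - Real.exp u|) ≤
      ‖u ^ n • dampedPsiError (1 + (Real.log x)⁻¹) u‖ := by
  have hx0 : 0 < x := (Real.exp_pos 2).trans_le hx
  have hL : 2 ≤ Real.log x := (Real.le_log_iff_exp_le hx0).2 hx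
  set L := Real.log x with hLdef
  have hu : L / 2 ≤ u := by linarith
  have hu0 : 0 < u := by linarith
  have hdamp : (x * Real.exp 2)⁻¹ ≤ Real.exp (-(1 + L⁻¹) * u) := by
    rw [← Real.exp_log hx0, ← Real.exp_add, ← Real.exp_neg, Real.exp_le_exp, ← hLdef]
    have hLu : L⁻¹ * u ≤ 3 / 2 := by
      rw [inv_mul_le_iff₀ (by linarith)]
      linarith
    linarith
  rw [dampedPsiError, Set.indicator_of_mem (Set.mem_Ioi.2 hu0), norm_smul, norm_real, norm_mul,
    Real.norm_of_nonneg (by positivity), Real.norm_of_nonneg (Real.exp_pos _).le, Real.norm_eq_abs]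
  gcongr

lemma exists_abs_psi_sub_self_div_cube_mul_log_pow_le (n : ℕ) :
    ∃ K, ∀ x, Real.exp 2 ≤ x → (|psi x - x| / x) ^ 3 * Real.log x ^ (2 * n) ≤ K := by
  obtain ⟨K, hK, hmean⟩ := exists_lintegral_pow_smul_dampedPsiError_le n
  refine ⟨216 * (16 * Real.exp 2 ^ 2 * 4 ^ n * K), fun x hx ↦ ?_⟩
  have hx0 : 0 < x := (Real.exp_pos 2).trans_le hx
  have hL : 2 ≤ Real.log x := (Real.le_log_iff_exp_le hx0).2 hx
  have hL0 : 0 < (Real.log x)⁻¹ := by positivity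
  have hL1 : (Real.log x)⁻¹ ≤ 1 / 2 := by
    rw [one_div]
    gcongr
  set d := |psi x - x| / x / 6 with hd
  have hd0 : 0 ≤ d := by positivity
  have hd1 : d ≤ 1 := by
    rw [hd, div_div, div_le_one (by positivity), mul_comm]
    exact abs_psi_sub_self_le hx0.le
  have hdx : d * x ≤ |psi x - x| := by
    rw [hd, div_right_comm, div_mul_cancel₀ _ hx0.ne']
    linarith [abs_nonneg (psi x - x)]
  obtain ⟨a, hLa, haL, hfar⟩ :=
    exists_forall_Icc_half_mul_le_abs_sub_of_monotone Chebyshev.psi_mono hx0 hd0 hd1 hdx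
  have hlow : ∀ u ∈ Set.Icc a (a + d / 4), (Real.log x / 2) ^ n * (d / (2 * Real.exp 2)) ≤
      ‖u ^ n • dampedPsiError (1 + (Real.log x)⁻¹) u‖ := fun u hu ↦ calc
    _ = (Real.log x / 2) ^ n * ((x * Real.exp 2)⁻¹ * (d * x / 2)) := by field_simp
    _ ≤ (Real.log x / 2) ^ n * ((x * Real.exp 2)⁻¹ * |psi (Real.exp u) - Real.exp u|) := by
      gcongr
      exact hfar u hu
    _ ≤ _ := le_norm_pow_smul_dampedPsiError n hx (hLa.trans hu.1) (hu.2.trans haL)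
  have hmass := sq_mul_le_of_lintegral_enorm_sq_le (by positivity) hK hlow
    (hmean (1 + (Real.log x)⁻¹) (by linarith) (by linarith))
  calc _ = 216 * (16 * Real.exp 2 ^ 2 * 4 ^ n *
        (((Real.log x / 2) ^ n * (d / (2 * Real.exp 2))) ^ 2 * (a + d / 4 - a))) := by
        rw [add_sub_cancel_left, hd, show (4 : ℝ) = 2 ^ 2 by norm_num, ← pow_mul 2 2 n,
          div_pow (Real.log x)]
        field_simp
        ring
    _ ≤ _ := by gcongr

lemma psi_sub_self_isBigO (N : ℕ) :
    (fun x ↦ psi x - x) =O[atTop] fun x ↦ x / Real.log x ^ N := by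
  obtain ⟨K, hK⟩ := exists_abs_psi_sub_self_div_cube_mul_log_pow_le (2 * N)
  refine IsBigO.of_bound (K + 1) ?_
  filter_upwards [eventually_ge_atTop (Real.exp 2)] with x hx
  have hx0 : 0 < x := (Real.exp_pos 2).trans_le hx
  have hL : 1 ≤ Real.log x := by linarith [(Real.le_log_iff_exp_le hx0).2 hx]
  set y := |psi x - x| / x * Real.log x ^ N with hy
  have hcube : y ^ 3 ≤ K := calc
    _ = (|psi x - x| / x) ^ 3 * Real.log x ^ (3 * N) := by ring
    _ ≤ (|psi x - x| / x) ^ 3 * Real.log x ^ (2 * (2 * N)) := by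
      gcongr ?_ * ?_
      exact pow_le_pow_right₀ hL (by lia)
    _ ≤ K := hK x hx
  have hyK : y ≤ K + 1 := by
    have hy0 : 0 ≤ y := by positivity
    nlinarith [mul_nonneg hy0 (sq_nonneg (y - 1)), sq_nonneg (y - 1)]
  rw [Real.norm_eq_abs, Real.norm_of_nonneg (by positivity)]
  calc _ = y * (x / Real.log x ^ N) := by rw [hy]; field_simp
    _ ≤ _ := by gcongr

lemma sqrt_isBigO_div_log_pow (N : ℕ) : Real.sqrt =O[atTop] fun x ↦ x / Real.log x ^ N := by
  have hlog : ∀ᶠ x in atTop, Real.log x ^ N ≠ 0 := by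
    filter_upwards [eventually_gt_atTop 1] with x hx using pow_ne_zero _ (Real.log_pos hx).ne'
  refine (isBigO_mul_iff_isBigO_div hlog).1 ?_
  have hlogN := (isLittleO_log_rpow_rpow_atTop N (one_half_pos (α := ℝ))).isBigO
  simp only [Real.rpow_natCast, ← Real.sqrt_eq_rpow] at hlogN
  refine (hlogN.mul (isBigO_refl Real.sqrt atTop)).congr' .rfl ?_
  filter_upwards [eventually_ge_atTop 0] with x hx using Real.mul_self_sqrt hx

lemma theta_sub_self_isBigO (N : ℕ) :
    (fun x ↦ theta x - x) =O[atTop] fun x ↦ x / Real.log x ^ N := by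
  refine ((psi_sub_self_isBigO N).sub
    (Chebyshev.isBigO_psi_sub_theta_sqrt.trans (sqrt_isBigO_div_log_pow N))).congr_left fun x ↦ ?_
  simp

theorem primeCounting_sub_div_log_isBigO :
    (fun x ↦ (Nat.primeCounting ⌊x⌋₊ : ℝ) - x / Real.log x) =O[atTop]
      fun x ↦ x / Real.log x ^ 2 := by
  have htheta : (fun x ↦ (theta x - x) / Real.log x) =O[atTop] fun x ↦ x / Real.log x ^ 2 := by
    refine ((theta_sub_self_isBigO 1).mul
      (isBigO_refl (fun x ↦ (Real.log x)⁻¹) atTop)).congr (fun x ↦ rfl) fun x ↦ ?_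
    ring
  refine (Chebyshev.primeCounting_sub_theta_div_log_isBigO.add htheta).congr_left fun x ↦ ?_
  ring

/-! ### Sums over primes -/

lemma two_mul_sum_primesLE_primeCounting (n : ℕ) :
    2 * ∑ p ∈ n.primesLE, p.primeCounting = n.primeCounting * (n.primeCounting + 1) := by
  induction n with
  | zero => simp
  | succ n ih =>
    by_cases hp : (n + 1).Prime
    · have hnot : n + 1 ∉ n.primesLE := by simp [Nat.mem_primesLE]
      have hsucc : (n + 1).primeCounting = n.primeCounting + 1 := by
        rw [← Nat.primesLE_card_eq_primeCounting, Nat.primesLE_succ, if_pos hp,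
          Finset.card_insert_of_notMem hnot, Nat.primesLE_card_eq_primeCounting]
      rw [Nat.primesLE_succ, if_pos hp, Finset.sum_insert hnot, mul_add, ih, hsucc]
      ring
    · have hsucc : (n + 1).primeCounting = n.primeCounting := by
        rw [← Nat.primesLE_card_eq_primeCounting, Nat.primesLE_succ, if_neg hp,
          Nat.primesLE_card_eq_primeCounting]
      rw [Nat.primesLE_succ, if_neg hp, ih, hsucc]

lemma div_log_sq_le_mul_div_log_sq {t y : ℝ} (ht : 2 ≤ t) (hty : t ≤ y) :
    t / Real.log t ^ 2 ≤ 16 * (y / Real.log y ^ 2) := by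
  have hlog : 1 / 2 ≤ Real.log t :=
    (by linarith [Real.log_two_gt_d9] : 1 / 2 ≤ Real.log 2).trans
      (Real.log_le_log two_pos ht)
  have ht0 : 0 < t := by linarith
  have hlogy : Real.log t ≤ Real.log y := Real.log_le_log ht0 hty
  have hratio : 1 ≤ y / t := (one_le_div ht0).2 hty
  have hle : Real.log y ≤ 4 * √(y / t) * Real.log t := by
    have hsqrt := Real.log_le_sub_one_of_pos (Real.sqrt_pos.2 (one_pos.trans_le hratio))
    rw [Real.log_sqrt (by positivity), Real.log_div (by linarith) ht0.ne'] at hsqrt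
    nlinarith [Real.one_le_sqrt.2 hratio]
  have hsq : Real.log y ^ 2 ≤ 16 * (y / t) * Real.log t ^ 2 := calc
    _ ≤ (4 * √(y / t) * Real.log t) ^ 2 := by gcongr; linarith
    _ = _ := by
      rw [mul_pow, mul_pow, Real.sq_sqrt (by positivity)]
      norm_num
  have hlogy0 : 0 < Real.log y := by linarith
  rw [← mul_div_assoc, div_le_div_iff₀ (by positivity) (by positivity)]
  calc _ ≤ t * (16 * (y / t) * Real.log t ^ 2) := by gcongr
    _ = _ := by field_simp

lemma exists_abs_primeCounting_sub_div_log_le :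
    ∃ C > 0, ∀ p : ℕ, p.Prime →
      |(p.primeCounting : ℝ) - p / Real.log p| ≤ C * (p / Real.log p ^ 2) := by
  obtain ⟨C, hC, hbound⟩ := bound_of_isBigO_nat_atTop
    (primeCounting_sub_div_log_isBigO.comp_tendsto tendsto_natCast_atTop_atTop)
  refine ⟨C, hC, fun p hp ↦ ?_⟩
  have hp0 : (0 : ℝ) < p := by exact_mod_cast hp.pos
  have hlog : 0 < Real.log p := Real.log_pos (by exact_mod_cast hp.one_lt)
  have hpos : 0 < (p : ℝ) / Real.log p ^ 2 := by positivity
  simpa [abs_of_pos hlog] using hbound (x := p) hpos.ne'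

lemma primeCounting_isBigO :
    (fun y ↦ (Nat.primeCounting ⌊y⌋₊ : ℝ)) =O[atTop] fun y ↦ y / Real.log y := by
  have hlog : (fun y ↦ y / Real.log y ^ 2) =O[atTop] fun y ↦ y / Real.log y := by
    refine IsBigO.of_bound' ?_
    filter_upwards [eventually_ge_atTop (Real.exp 1)] with y hy
    have hy0 : 0 < y := (Real.exp_pos 1).trans_le hy
    have hlog1 : 1 ≤ Real.log y := (Real.le_log_iff_exp_le hy0).2 hy
    rw [Real.norm_of_nonneg (by positivity), Real.norm_of_nonneg (by positivity)]
    gcongr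
    exact le_self_pow₀ hlog1 two_ne_zero
  refine ((primeCounting_sub_div_log_isBigO.trans hlog).add (isBigO_refl _ _)).congr_left
    fun y ↦ ?_
  ring

lemma sum_primesLE_primeCounting_sub_div_log_isBigO :
    (fun y : ℝ ↦ ∑ p ∈ ⌊y⌋₊.primesLE, ((p.primeCounting : ℝ) - p / Real.log p)) =O[atTop]
      fun y ↦ y ^ 2 / Real.log y ^ 3 := by
  obtain ⟨C, hC, hbound⟩ := exists_abs_primeCounting_sub_div_log_le
  have hsum : (fun y : ℝ ↦ ∑ p ∈ ⌊y⌋₊.primesLE, ((p.primeCounting : ℝ) - p / Real.log p))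
      =O[atTop] fun y ↦ (Nat.primeCounting ⌊y⌋₊ : ℝ) * (y / Real.log y ^ 2) := by
    refine IsBigO.of_bound (C * 16) ?_
    filter_upwards [eventually_ge_atTop 2] with y hy
    rw [Real.norm_of_nonneg (by positivity : 0 ≤ Nat.primeCounting ⌊y⌋₊ * (y / Real.log y ^ 2))]
    calc _ ≤ ∑ p ∈ ⌊y⌋₊.primesLE, C * (16 * (y / Real.log y ^ 2)) := by
          refine norm_sum_le_of_le _ fun p hp ↦ ?_
          obtain ⟨hpy, hp⟩ := Nat.mem_primesLE.1 hp
          refine (hbound p hp).trans ?_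
          gcongr
          exact div_log_sq_le_mul_div_log_sq (by exact_mod_cast hp.two_le)
            ((Nat.le_floor_iff (by linarith)).1 hpy)
      _ = _ := by
        rw [Finset.sum_const, Nat.primesLE_card_eq_primeCounting, nsmul_eq_mul]
        ring
  refine hsum.trans ((primeCounting_isBigO.mul (isBigO_refl _ _)).congr_right fun y ↦ ?_)
  ring

lemma sum_primesLE_primeCounting_isBigO :
    (fun y : ℝ ↦ ∑ p ∈ ⌊y⌋₊.primesLE, (p.primeCounting : ℝ) - y ^ 2 / (2 * Real.log y ^ 2))
      =O[atTop] fun y ↦ y ^ 2 / Real.log y ^ 3 := by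
  have hsq : (fun y ↦ ((Nat.primeCounting ⌊y⌋₊ : ℝ) - y / Real.log y) *
      (Nat.primeCounting ⌊y⌋₊ + y / Real.log y)) =O[atTop] fun y ↦ y ^ 2 / Real.log y ^ 3 :=
    (primeCounting_sub_div_log_isBigO.mul
      (primeCounting_isBigO.add (isBigO_refl _ _))).congr_right fun y ↦ by ring
  have hlinear : (fun y ↦ (Nat.primeCounting ⌊y⌋₊ : ℝ)) =O[atTop]
      fun y ↦ y ^ 2 / Real.log y ^ 3 := by
    have hlog : (fun y ↦ Real.log y ^ 2) =O[atTop] fun y : ℝ ↦ y :=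
      Real.isLittleO_pow_log_id_atTop.isBigO
    refine primeCounting_isBigO.trans ?_
    refine ((hlog.mul (isBigO_refl (fun y ↦ y / Real.log y ^ 3) atTop)).congr' ?_ ?_)
    · filter_upwards [eventually_gt_atTop 1] with y hy
      have := Real.log_pos hy
      field_simp
    · exact .of_forall fun y ↦ by ring
  refine ((hsq.add hlinear).const_mul_left (1 / 2)).congr_left fun y ↦ ?_
  have hdouble := congrArg (Nat.cast (R := ℝ)) (two_mul_sum_primesLE_primeCounting ⌊y⌋₊)
  push_cast at hdouble
  linear_combination -hdouble / 2

theorem sum_primesLE_div_log_sub_isBigO :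
    (fun y : ℝ ↦ ∑ p ∈ ⌊y⌋₊.primesLE, (p : ℝ) / Real.log p - y ^ 2 / (2 * Real.log y ^ 2))
      =O[atTop] fun y ↦ y ^ 2 / Real.log y ^ 3 := by
  refine (sum_primesLE_primeCounting_isBigO.sub
    sum_primesLE_primeCounting_sub_div_log_isBigO).congr_left fun y ↦ ?_
  rw [Finset.sum_sub_distrib]
  ring

lemma sum_primesLE_sqrt_div_log_sub_isBigO :
    (fun x : ℝ ↦ ∑ p ∈ ⌊√x⌋₊.primesLE, (p : ℝ) / Real.log p - 2 * x / Real.log x ^ 2)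
      =O[atTop] fun x ↦ x / Real.log x ^ 3 := by
  have hsqrt := sum_primesLE_div_log_sub_isBigO.comp_tendsto Real.tendsto_sqrt_atTop
  refine (hsqrt.congr' ?_ ?_).trans (isBigO_const_mul_self 8 _ _)
  all_goals
    filter_upwards [eventually_ge_atTop 0] with x hx
    simp only [Function.comp_apply, Real.log_sqrt hx, Real.sq_sqrt hx]
    ring

lemma isBigO_principal_Ici_of_isBigO_atTop {α E F : Type*} [LinearOrder α] [TopologicalSpace α]
    [CompactIccSpace α] [SeminormedAddCommGroup E] [NormedAddCommGroup F] {f : α → E} {g : α → F}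
    {a : α} (h : f =O[atTop] g)
    (hf : ∀ b, f =O[𝓟 (Set.Icc a b)] (1 : α → ℝ)) (hg : ContinuousOn g (Set.Ici a))
    (hg0 : ∀ x ∈ Set.Ici a, g x ≠ 0) : f =O[𝓟 (Set.Ici a)] g := by
  have : Nonempty α := ⟨a⟩
  obtain ⟨C, hC⟩ := h.bound
  obtain ⟨b, hb⟩ := eventually_atTop.1 hC
  have htail : f =O[𝓟 (Set.Ici b)] g := isBigO_principal.2 ⟨C, hb⟩
  have hone : (1 : α → ℝ) =O[𝓟 (Set.Icc a b)] g :=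
    (hg.mono Set.Icc_subset_Ici_self).isBigO_rev_principal isCompact_Icc
      (fun x hx ↦ hg0 x hx.1) 1
  refine (((hf b).trans hone).sup htail).mono ?_
  rw [sup_principal, principal_mono]
  exact fun x hx ↦ (le_total x b).imp (fun hxb ↦ ⟨hx, hxb⟩) id

lemma sum_primesLE_sqrt_div_log_isBigO_one (a b : ℝ) :
    (fun x : ℝ ↦ ∑ p ∈ ⌊√x⌋₊.primesLE, (p : ℝ) / Real.log p) =O[𝓟 (Set.Icc a b)]
      (1 : ℝ → ℝ) := by
  have hnonneg (p : ℕ) : 0 ≤ (p : ℝ) / Real.log p :=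
    div_nonneg p.cast_nonneg (Real.log_natCast_nonneg p)
  refine isBigO_principal.2 ⟨∑ p ∈ ⌊√b⌋₊.primesLE, (p : ℝ) / Real.log p, fun x hx ↦ ?_⟩
  rw [Real.norm_of_nonneg (Finset.sum_nonneg fun p _ ↦ hnonneg p), Pi.one_apply, norm_one, mul_one]
  exact Finset.sum_le_sum_of_subset_of_nonneg
    (Nat.primesLE_mono (Nat.floor_le_floor (Real.sqrt_le_sqrt hx.2))) fun p _ _ ↦ hnonneg p

lemma continuousOn_mul_div_log_pow (c : ℝ) (n : ℕ) :
    ContinuousOn (fun x ↦ c * x / Real.log x ^ n) (Set.Ioi 1) := by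
  have hlog : ∀ x ∈ Set.Ioi (1 : ℝ), Real.log x ≠ 0 := fun x hx ↦ (Real.log_pos hx).ne'
  have hne : ∀ x ∈ Set.Ioi (1 : ℝ), x ≠ 0 := fun x hx ↦ (one_pos.trans hx).ne'
  fun_prop (disch := simp_all)

lemma sum_primesLE_sqrt_div_log_sub_isBigO_principal :
    (fun x : ℝ ↦ ∑ p ∈ ⌊√x⌋₊.primesLE, (p : ℝ) / Real.log p - 2 * x / Real.log x ^ 2)
      =O[𝓟 (Set.Ici 2)] fun x ↦ x / Real.log x ^ 3 := by
  have htwo : Set.Ici (2 : ℝ) ⊆ Set.Ioi 1 := Set.Ici_subset_Ioi.2 one_lt_two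
  refine isBigO_principal_Ici_of_isBigO_atTop sum_primesLE_sqrt_div_log_sub_isBigO
    (fun b ↦ (sum_primesLE_sqrt_div_log_isBigO_one 2 b).sub ?_) ?_ fun x hx ↦ ?_
  · exact ((continuousOn_mul_div_log_pow 2 2).mono
      (Set.Icc_subset_Ici_self.trans htwo)).isBigO_principal (c := (1 : ℝ))
      isCompact_Icc (by simp)
  · simpa using (continuousOn_mul_div_log_pow 1 3).mono htwo
  · have hlog : 0 < Real.log x := Real.log_pos (htwo hx)
    have hx0 : 0 < x := two_pos.trans_le hx
    positivity

lemma filter_prime_le_eq_primesLE {y : ℝ} (hy : 0 ≤ y) :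
    (Finset.range (⌊y⌋₊ + 1)).filter (fun p : ℕ ↦ p.Prime ∧ (p : ℝ) ≤ y) = ⌊y⌋₊.primesLE := by
  ext p
  simp only [Finset.mem_filter, Finset.mem_range_succ_iff, Nat.mem_primesLE, ← Nat.le_floor_iff hy]
  tauto

end PrimeNumberTheorem

theorem stmt_11 :
    ∃ C : ℝ, 0 < C ∧ ∀ x : ℝ, 2 ≤ x →
      |(∑ p ∈ (Finset.range (⌊Real.sqrt x⌋₊ + 1)).filter
            (fun p : ℕ => p.Prime ∧ (p : ℝ) ≤ Real.sqrt x),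
          (p : ℝ) / Real.log p) - 2 * x / (Real.log x) ^ 2| ≤
        C * (x / (Real.log x) ^ 3) := by
  obtain ⟨C, hC, hbound⟩ :=
    PrimeNumberTheorem.sum_primesLE_sqrt_div_log_sub_isBigO_principal.exists_pos
  refine ⟨C, hC, fun x hx ↦ ?_⟩
  have hlog : 0 < Real.log x := Real.log_pos (by linarith)
  have hmain : 0 ≤ x / Real.log x ^ 3 := by positivity
  rw [PrimeNumberTheorem.filter_prime_le_eq_primesLE (Real.sqrt_nonneg x)]
  simpa only [Real.norm_eq_abs, abs_of_nonneg hmain] using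
    Asymptotics.isBigOWith_principal.1 hbound x hx
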